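/- For p > 1 there exist constants 0 < c ≤ C < ∞ (depending only on p) such that for all real a, b: c·(b-a)^2·(max(|a|,|b|))^{p-2} ≤ F(a,b) ≤ C·(b-a)^2·(max(|a|,|b|))^{p-2}. -/

import Mathlib

noncomputable def F (p a b : ℝ) : ℝ :=
  |b| ^ p - |a| ^ p - p * a * |a| ^ (p - 2) * (b - a)

open Set Filter Topology

/-- A function on `[-1, 1]` that is positive away from `1` and vanishes there to second order exactly
is comparable to `(x - 1) ^ 2`. -/
theorem exists_quadratic_bounds {f : ℝ → ℝ} {L : ℝ} (hf : Continuous f) (hf1 : f 1 = 0)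
    (hpos : ∀ x, x < 1 → 0 < f x) (hL : 0 < L)
    (hlim : Tendsto (fun x => f x / (x - 1) ^ 2) (𝓝[<] 1) (𝓝 L)) :
    ∃ c C : ℝ, 0 < c ∧ c ≤ C ∧ ∀ x ∈ Icc (-1 : ℝ) 1,
      c * (x - 1) ^ 2 ≤ f x ∧ f x ≤ C * (x - 1) ^ 2 := by
  set g : ℝ → ℝ := Function.update (fun x => f x / (x - 1) ^ 2) 1 L with hg
  have hgc : ContinuousOn g (Icc (-1) 1) := by
    rw [hg, continuousOn_update_iff]
    refine ⟨hf.continuousOn.div (by fun_prop) ?_, fun _ => hlim.mono_left (nhdsWithin_mono _ ?_)⟩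
    · rintro x ⟨-, hx⟩
      exact pow_ne_zero _ (sub_ne_zero.2 hx)
    · rintro x ⟨hx, hx1⟩
      exact lt_of_le_of_ne hx.2 hx1
  have hg_mul : ∀ x, g x * (x - 1) ^ 2 = f x := fun x => by
    rcases eq_or_ne x 1 with rfl | hx
    · simp [hf1]
    · rw [hg, Function.update_of_ne hx, div_mul_cancel₀ _ (pow_ne_zero _ (sub_ne_zero.2 hx))]
  have hg_pos : ∀ x ∈ Icc (-1 : ℝ) 1, 0 < g x := fun x hx => by
    rcases hx.2.eq_or_lt with rfl | hx1
    · simpa [hg] using hL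
    · exact pos_of_mul_pos_left (by rw [hg_mul]; exact hpos x hx1) (sq_nonneg (x - 1))
  have hne : (Icc (-1 : ℝ) 1).Nonempty := ⟨1, by norm_num, le_rfl⟩
  obtain ⟨u, hu, humin⟩ := isCompact_Icc.exists_isMinOn hne hgc
  obtain ⟨v, hv, hvmax⟩ := isCompact_Icc.exists_isMaxOn hne hgc
  refine ⟨g u, g v, hg_pos u hu, hvmax hu, fun x hx => ?_⟩
  rw [← hg_mul x]
  exact ⟨mul_le_mul_of_nonneg_right (humin hx) (sq_nonneg _),
    mul_le_mul_of_nonneg_right (hvmax hx) (sq_nonneg _)⟩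

theorem abs_rpow_eq_mul_sq {s : ℝ} (p : ℝ) (hs : s ≠ 0) : |s| ^ p = |s| ^ (p - 2) * s ^ 2 := by
  rw [← sq_abs s, ← Real.rpow_natCast, ← Real.rpow_add (abs_pos.2 hs)]
  norm_num

theorem F_mul_mul {p s : ℝ} (hs : s ≠ 0) (a b : ℝ) : F p (s * a) (s * b) = |s| ^ p * F p a b := by
  simp only [F, abs_mul, Real.mul_rpow (abs_nonneg _) (abs_nonneg _)]
  rw [abs_rpow_eq_mul_sq p hs]
  ring

theorem mul_abs_rpow_sub_two {p : ℝ} (hp : 1 < p) (x : ℝ) :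
    x * |x| ^ (p - 2) = max x 0 ^ (p - 1) - max (-x) 0 ^ (p - 1) := by
  have h0 : (0 : ℝ) ^ (p - 1) = 0 := Real.zero_rpow (by linarith)
  have key : ∀ y : ℝ, 0 < y → y * y ^ (p - 2) = y ^ (p - 1) := fun y hy => by
    rw [show p - 1 = 1 + (p - 2) by ring, Real.rpow_add hy, Real.rpow_one]
  rcases lt_trichotomy x 0 with hx | rfl | hx
  · rw [max_eq_right hx.le, max_eq_left (by linarith), h0, abs_of_neg hx, ← key (-x) (by linarith)]
    ring
  · simp
  · rw [max_eq_left hx.le, max_eq_right (by linarith), h0, abs_of_pos hx, key x hx, sub_zero]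

theorem continuous_F_one_left {p : ℝ} (hp : 1 < p) : Continuous (F p 1) := by
  unfold F
  have : Continuous fun x : ℝ => |x| ^ p := continuous_abs.rpow_const fun _ => Or.inr (by linarith)
  fun_prop

theorem continuous_F_one_right {p : ℝ} (hp : 1 < p) : Continuous fun x => F p x 1 := by
  simp only [F, mul_assoc p, mul_abs_rpow_sub_two hp]
  have h₁ : Continuous fun x : ℝ => |x| ^ p :=
    continuous_abs.rpow_const fun _ => Or.inr (by linarith)
  have h₂ : Continuous fun x : ℝ => max x 0 ^ (p - 1) :=
    (continuous_id.max continuous_const).rpow_const fun _ => Or.inr (by linarith)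
  have h₃ : Continuous fun x : ℝ => max (-x) 0 ^ (p - 1) :=
    (continuous_neg.max continuous_const).rpow_const fun _ => Or.inr (by linarith)
  fun_prop

theorem F_one_left_pos {p x : ℝ} (hp : 1 < p) (hx : x ≠ 1) : 0 < F p 1 x := by
  simp only [F, abs_one, Real.one_rpow, mul_one]
  rcases eq_or_ne |x| 1 with h | h
  · have hx' : x < 1 := lt_of_le_of_ne (h ▸ le_abs_self x) hx
    rw [h, Real.one_rpow]
    nlinarith
  · have := one_add_mul_self_lt_rpow_one_add (s := |x| - 1) (by linarith [abs_nonneg x])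
      (sub_ne_zero.2 h) hp
    rw [add_sub_cancel] at this
    nlinarith [le_abs_self x]

theorem F_one_right_pos {p x : ℝ} (hp : 1 < p) (hx : x ≠ 1) : 0 < F p x 1 := by
  rcases eq_or_ne x 0 with rfl | h0
  · simp [F, Real.zero_rpow (by linarith : p ≠ 0)]
  · have h := F_mul_mul (p := p) h0 1 x⁻¹
    rw [mul_one, mul_inv_cancel₀ h0] at h
    rw [h]
    exact mul_pos (Real.rpow_pos_of_pos (abs_pos.2 h0) p) (F_one_left_pos hp (by simpa using hx))

theorem tendsto_div_sub_one_sq {f f' : ℝ → ℝ} {L : ℝ} (hf : Continuous f) (hf1 : f 1 = 0)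
    (hf' : ∀ x, 0 < x → HasDerivAt f (f' x) x)
    (hlim : Tendsto (fun x => f' x / (x - 1)) (𝓝[<] 1) (𝓝 (2 * L))) :
    Tendsto (fun x => f x / (x - 1) ^ 2) (𝓝[<] 1) (𝓝 L) := by
  have hpos : ∀ᶠ x : ℝ in 𝓝[<] 1, 0 < x :=
    mem_nhdsWithin_of_mem_nhds (lt_mem_nhds one_pos)
  refine HasDerivAt.lhopital_zero_nhdsLT (f' := f') (g' := fun x => 2 * (x - 1))
    (hpos.mono hf') (Eventually.of_forall fun x => ?_) ?_ ?_ ?_ ?_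
  · simpa using! ((hasDerivAt_id x).sub_const 1).pow 2
  · filter_upwards [self_mem_nhdsWithin] with x hx
    exact mul_ne_zero two_ne_zero (sub_ne_zero.2 (ne_of_lt hx))
  · exact (hf.tendsto' 1 0 hf1).mono_left nhdsWithin_le_nhds
  · exact ((by fun_prop : Continuous fun x : ℝ => (x - 1) ^ 2).tendsto' 1 0 (by simp)).mono_left
      nhdsWithin_le_nhds
  · have := hlim.div_const 2
    rw [mul_div_cancel_left₀ L two_ne_zero] at this
    refine this.congr fun x => ?_
    rw [div_div, mul_comm]

theorem hasDerivAt_abs_rpow_of_pos {x : ℝ} (p : ℝ) (hx : 0 < x) :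
    HasDerivAt (fun y : ℝ => |y| ^ p) (p * x ^ (p - 1)) x :=
  (Real.hasDerivAt_rpow_const (Or.inl hx.ne')).congr_of_eventuallyEq <| by
    filter_upwards [lt_mem_nhds hx] with y hy
    rw [abs_of_pos hy]

theorem tendsto_F_one_left {p : ℝ} (hp : 1 < p) :
    Tendsto (fun x => F p 1 x / (x - 1) ^ 2) (𝓝[<] 1) (𝓝 (p * (p - 1) / 2)) := by
  refine tendsto_div_sub_one_sq (f' := fun x => p * (x ^ (p - 1) - 1)) (continuous_F_one_left hp)
    (by simp [F]) (fun x hx => ?_) ?_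
  · have h := ((hasDerivAt_abs_rpow_of_pos p hx).sub_const 1).sub
      (((hasDerivAt_id x).sub_const 1).const_mul p)
    refine (h.congr_of_eventuallyEq (Eventually.of_forall fun y => ?_)).congr_deriv (by ring)
    simp [F]
  · have h : HasDerivAt (fun x : ℝ => x ^ (p - 1)) (p - 1) 1 := by
      simpa using Real.hasDerivAt_rpow_const (x := 1) (p := p - 1) (Or.inl one_ne_zero)
    have h' := ((hasDerivAt_iff_tendsto_slope.1 h).mono_left
      (nhdsWithin_mono 1 fun x (hx : x < 1) => hx.ne)).const_mul p
    rw [mul_div_cancel₀ _ two_ne_zero]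
    refine h'.congr fun x => ?_
    rw [slope_def_field, Real.one_rpow, mul_div_assoc]

theorem tendsto_F_one_right {p : ℝ} (hp : 1 < p) :
    Tendsto (fun x => F p x 1 / (x - 1) ^ 2) (𝓝[<] 1) (𝓝 (p * (p - 1) / 2)) := by
  refine tendsto_div_sub_one_sq (f' := fun x => p * (p - 1) * x ^ (p - 2) * (x - 1))
    (continuous_F_one_right hp) (by simp [F]) (fun x hx => ?_) ?_
  · have h₁ := Real.hasDerivAt_rpow_const (x := x) (p := p) (Or.inl hx.ne')
    have h₂ := Real.hasDerivAt_rpow_const (x := x) (p := p - 1) (Or.inl hx.ne')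
    have h := ((h₁.const_mul (p - 1)).sub (h₂.const_mul p)).const_add 1
    have hmul : ∀ y : ℝ, 0 < y → ∀ q : ℝ, y ^ (q - 1) * y = y ^ q := fun y hy q => by
      rw [← Real.rpow_add_one hy.ne', sub_add_cancel]
    refine (h.congr_of_eventuallyEq ?_).congr_deriv ?_
    · filter_upwards [lt_mem_nhds hx] with y hy
      have e₁ := hmul y hy p
      have e₂ := hmul y hy (p - 1)
      rw [show p - 1 - 1 = p - 2 by ring] at e₂
      simp only [F, abs_one, Real.one_rpow, abs_of_pos hy, Pi.sub_apply]
      rw [← e₁, ← e₂]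
      ring
    · have e₂ := hmul x hx (p - 1)
      rw [show p - 1 - 1 = p - 2 by ring] at e₂ ⊢
      rw [← e₂]
      ring
  · have h : Tendsto (fun x : ℝ => p * (p - 1) * x ^ (p - 2)) (𝓝[<] 1) (𝓝 (p * (p - 1))) := by
      have := (Real.continuousAt_rpow_const 1 (p - 2) (Or.inl one_ne_zero)).tendsto.const_mul
        (p * (p - 1))
      rw [Real.one_rpow, mul_one] at this
      exact this.mono_left nhdsWithin_le_nhds
    rw [mul_div_cancel₀ _ two_ne_zero]
    refine h.congr' ?_
    filter_upwards [self_mem_nhdsWithin] with x hx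
    rw [mul_div_cancel_right₀ _ (sub_ne_zero.2 (ne_of_lt hx))]

theorem abs_rpow_mul_div_sub_one_sq {a : ℝ} (p : ℝ) (ha : a ≠ 0) (b : ℝ) :
    |a| ^ p * (b / a - 1) ^ 2 = (b - a) ^ 2 * |a| ^ (p - 2) := by
  rw [abs_rpow_eq_mul_sq p ha]
  field_simp

theorem div_mem_Icc_of_abs_le {a b : ℝ} (h : |b| ≤ |a|) : b / a ∈ Icc (-1 : ℝ) 1 := by
  rw [mem_Icc, ← abs_le, abs_div]
  exact div_le_one_of_le₀ h (abs_nonneg a)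

theorem F_comparable (p : ℝ) (hp : 1 < p) :
    ∃ c C : ℝ, 0 < c ∧ c ≤ C ∧ ∀ a b : ℝ,
      c * (b - a) ^ 2 * (max |a| |b|) ^ (p - 2) ≤ F p a b ∧
      F p a b ≤ C * (b - a) ^ 2 * (max |a| |b|) ^ (p - 2) := by
  have hL : 0 < p * (p - 1) / 2 := by
    have : 0 < p - 1 := by linarith
    positivity
  obtain ⟨c₁, C₁, hc₁, hcC₁, h₁⟩ := exists_quadratic_bounds (continuous_F_one_left hp)
    (by simp [F]) (fun x hx => F_one_left_pos hp hx.ne) hL (tendsto_F_one_left hp)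
  obtain ⟨c₂, C₂, hc₂, -, h₂⟩ := exists_quadratic_bounds (continuous_F_one_right hp)
    (by simp [F]) (fun x hx => F_one_right_pos hp hx.ne) hL (tendsto_F_one_right hp)
  refine ⟨min c₁ c₂, max C₁ C₂, lt_min hc₁ hc₂,
    (min_le_left _ _).trans (hcC₁.trans (le_max_left _ _)), fun a b => ?_⟩
  simp only [mul_assoc]
  rcases le_total |b| |a| with h | h
  · rcases eq_or_ne a 0 with rfl | ha
    · obtain rfl : b = 0 := by simpa using h
      simp [F]
    · have hF := F_mul_mul (p := p) ha 1 (b / a)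
      rw [mul_one, mul_div_cancel₀ _ ha] at hF
      obtain ⟨hl, hu⟩ := h₁ _ (div_mem_Icc_of_abs_le h)
      rw [max_eq_left h, ← abs_rpow_mul_div_sub_one_sq p ha, hF,
        mul_left_comm, mul_left_comm _ (|a| ^ p)]
      constructor <;> gcongr
      · exact le_trans (by gcongr; exact min_le_left _ _) hl
      · exact hu.trans (by gcongr; exact le_max_left _ _)
  · rcases eq_or_ne b 0 with rfl | hb
    · obtain rfl : a = 0 := by simpa using h
      simp [F]
    · have hF := F_mul_mul (p := p) hb (a / b) 1
      rw [mul_one, mul_div_cancel₀ _ hb] at hF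
      obtain ⟨hl, hu⟩ := h₂ _ (div_mem_Icc_of_abs_le h)
      rw [max_eq_right h, ← neg_sq, neg_sub, ← abs_rpow_mul_div_sub_one_sq p hb, hF,
        mul_left_comm, mul_left_comm _ (|b| ^ p)]
      constructor <;> gcongr
      · exact le_trans (by gcongr; exact min_le_right _ _) hl
      · exact hu.trans (by gcongr; exact le_max_right _ _)
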